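/- Let β < 1 (with α, β ∈ [0,1]). Let x : ℤ → Bool be an island of pluses, i.e. {i | x i = true} is finite. Then the iterates F^t δ_x converge on thin cylinders, as t → ∞, to δ_{all-minus}, the Dirac measure at the constant configuration false. -/

import Mathlib

/-!
The rightmost plus of an island never moves to the right, since two neighbouring minuses produce
a minus; and whatever happens to its left, it disappears with probability at least `1 - β` at each
step. Hence, almost surely, it drifts to `-∞` or the pluses die out, and every finite window is
eventually empty of pluses.

Quantitatively, let `u t n` be the probability that at time `t` some site `i ≥ n` is plus.
Conditioning on the previous configuration gives `u (t+1) n ≤ β * u t n + (1 - β) * u t (n+1)`.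
If the initial island lies strictly to the left of `N`, then `u 0 n ≤ 2 ^ (N - n)`, and this weight
is contracted by the recursion: `u t n ≤ ((1 + β) / 2) ^ t * 2 ^ (N - n)`, which tends to `0`.
Only upper bounds of integrals of the kernel occur, so its measurability plays no role.
-/

open MeasureTheory Filter

namespace PCA

/-- Configuration space: `true` is ⊕ (plus), `false` is ⊖ (minus). -/
abbrev Config : Type := ℤ → Bool

/-- Transition probabilities of the PCA. -/
def theta (α β : ℝ) : Bool → Bool → ℝ
  | false, false => 0
  | true,  false => β
  | false, true  => α
  | true,  true  => 1

/-- Thin cylinder determined by a finite set of coordinates and prescribed values. -/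
def cyl (S : Finset ℤ) (a : ℤ → Bool) : Set Config := {y | ∀ i ∈ S, y i = a i}

/-- `K` is the update kernel of the PCA: from configuration `x`, all sites update
independently, site `i` becoming plus with probability `theta α β (x i) (x (i+1))`.
This pins down `K x` as the corresponding product of Bernoulli measures, via its
values on thin cylinders. -/
def IsPCAKernel (α β : ℝ) (K : Config → Measure Config) : Prop :=
  (∀ x, IsProbabilityMeasure (K x)) ∧
  ∀ (x : Config) (S : Finset ℤ) (a : ℤ → Bool),
    K x (cyl S a) =
      ∏ i ∈ S, ENNReal.ofReal
        (if a i then theta α β (x i) (x (i + 1)) else 1 - theta α β (x i) (x (i + 1)))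

/-- `F` is the PCA operator with parameters `α, β`: `F μ` is `μ` bound with the
product-Bernoulli update kernel. -/
def IsPCA (α β : ℝ) (F : Measure Config → Measure Config) : Prop :=
  ∃ K : Config → Measure Config, IsPCAKernel α β K ∧
    ∀ (μ : Measure Config) (A : Set Config), MeasurableSet A →
      F μ A = ∫⁻ x, K x A ∂μ

/-- The configuration "all minuses". -/
def allMinus : Config := fun _ => false

/-- The configuration "all pluses". -/
def allPlus : Config := fun _ => true

/-- Convergence of a sequence of measures to `ν` on all thin cylinders. -/
def TendstoCyl (seq : ℕ → Measure Config) (ν : Measure Config) : Prop :=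
  ∀ (S : Finset ℤ) (a : ℤ → Bool),
    Tendsto (fun t => seq t (cyl S a)) atTop (nhds (ν (cyl S a)))

end PCA

namespace PCA

/-- The event that some site at or to the right of `n` is plus. -/
def plusFrom (n : ℤ) : Set Config := {y | ∃ i, n ≤ i ∧ y i = true}

lemma measurableSet_cyl (S : Finset ℤ) (a : ℤ → Bool) : MeasurableSet (cyl S a) := by
  have : cyl S a = ⋂ i ∈ S, (fun y : Config => y i) ⁻¹' {a i} := by
    ext y; simp [cyl]
  rw [this]
  exact Finset.measurableSet_biInter S fun i _ =>
    measurable_pi_apply i (measurableSet_singleton _)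

lemma plusFrom_eq_iUnion (n : ℤ) :
    plusFrom n = ⋃ i : ℤ, ⋃ _ : n ≤ i, cyl {i} (fun _ => true) := by
  ext y; simp [plusFrom, cyl]

lemma measurableSet_plusFrom (n : ℤ) : MeasurableSet (plusFrom n) := by
  rw [plusFrom_eq_iUnion]
  exact MeasurableSet.iUnion fun i => MeasurableSet.iUnion fun _ => measurableSet_cyl _ _

lemma plusFrom_succ_subset (n : ℤ) : plusFrom (n + 1) ⊆ plusFrom n := by
  rintro y ⟨i, hi, hy⟩
  exact ⟨i, by omega, hy⟩

lemma plusFrom_subset (n : ℤ) :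
    plusFrom n ⊆ cyl {n} (fun _ => true) ∪ plusFrom (n + 1) := by
  rintro y ⟨i, hi, hy⟩
  rcases eq_or_lt_of_le hi with rfl | h
  · left; simpa [cyl] using hy
  · right; exact ⟨i, by omega, hy⟩

section Kernel

variable {α β : ℝ} {K : Config → Measure Config}

lemma IsPCAKernel.apply_plus (hK : IsPCAKernel α β K) (y : Config) (i : ℤ) :
    K y (cyl {i} (fun _ => true)) = ENNReal.ofReal (theta α β (y i) (y (i + 1))) := by
  simp [hK.2 y {i} (fun _ => true)]

/-- A configuration without pluses from `n` on produces almost surely none there. -/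
lemma IsPCAKernel.apply_plusFrom_eq_zero (hK : IsPCAKernel α β K) {y : Config} {n : ℤ}
    (hy : y ∉ plusFrom n) : K y (plusFrom n) = 0 := by
  have hf : ∀ i, n ≤ i → y i = false := by
    intro i hi
    by_contra h
    exact hy ⟨i, hi, by simpa using h⟩
  rw [plusFrom_eq_iUnion]
  refine measure_iUnion_null fun i => measure_iUnion_null fun hi => ?_
  rw [hK.apply_plus, hf i hi, hf (i + 1) (by omega)]
  simp [theta]

/-- One-step estimate for the kernel. The three cases are: a plus beyond `n` (bound `1`),
rightmost plus exactly at `n` (bound `β`), and no plus from `n` on (bound `0`). -/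
lemma IsPCAKernel.apply_plusFrom_le (hK : IsPCAKernel α β K) (hβ0 : 0 ≤ β) (hβ1 : β ≤ 1)
    (y : Config) (n : ℤ) :
    K y (plusFrom n) ≤ (plusFrom n).indicator (fun _ => ENNReal.ofReal β) y
      + (plusFrom (n + 1)).indicator (fun _ => ENNReal.ofReal (1 - β)) y := by
  by_cases h1 : y ∈ plusFrom (n + 1)
  · have := hK.1 y
    rw [Set.indicator_of_mem h1, Set.indicator_of_mem (plusFrom_succ_subset n h1),
      ← ENNReal.ofReal_add hβ0 (by linarith)]
    simpa using prob_le_one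
  by_cases h0 : y ∈ plusFrom n
  · rw [Set.indicator_of_mem h0, Set.indicator_of_notMem h1, add_zero]
    have hn : y n = true := by
      rcases plusFrom_subset n h0 with h | h
      · simpa [cyl] using h
      · exact absurd h h1
    have hn1 : y (n + 1) = false := by
      by_contra h
      exact h1 ⟨n + 1, le_rfl, by simpa using h⟩
    calc K y (plusFrom n)
        ≤ K y (cyl {n} (fun _ => true)) + K y (plusFrom (n + 1)) :=
          (measure_mono (plusFrom_subset n)).trans (measure_union_le _ _)
      _ = ENNReal.ofReal β := by
          rw [hK.apply_plusFrom_eq_zero h1, hK.apply_plus, hn, hn1, add_zero, theta]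
  · simp [hK.apply_plusFrom_eq_zero h0]

end Kernel

section Operator

variable {α β : ℝ} {F : Measure Config → Measure Config}

lemma IsPCA.isProbabilityMeasure (hF : IsPCA α β F) (μ : Measure Config)
    [IsProbabilityMeasure μ] : IsProbabilityMeasure (F μ) := by
  obtain ⟨K, hK, h⟩ := hF
  have := hK.1
  exact ⟨by simp [h μ _ MeasurableSet.univ]⟩

lemma IsPCA.isProbabilityMeasure_iterate (hF : IsPCA α β F) (x : Config) (t : ℕ) :
    IsProbabilityMeasure (F^[t] (Measure.dirac x)) := by
  induction t with
  | zero => rw [Function.iterate_zero, id]; infer_instance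
  | succ t ih => rw [Function.iterate_succ_apply']; exact hF.isProbabilityMeasure _

lemma IsPCA.apply_plusFrom_le (hF : IsPCA α β F) (hβ0 : 0 ≤ β) (hβ1 : β ≤ 1)
    (μ : Measure Config) (n : ℤ) :
    F μ (plusFrom n) ≤ ENNReal.ofReal β * μ (plusFrom n)
      + ENNReal.ofReal (1 - β) * μ (plusFrom (n + 1)) := by
  obtain ⟨K, hK, h⟩ := hF
  rw [h μ _ (measurableSet_plusFrom n)]
  refine (lintegral_mono fun y => hK.apply_plusFrom_le hβ0 hβ1 y n).trans_eq ?_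
  rw [lintegral_add_left (measurable_const.indicator (measurableSet_plusFrom n)),
    lintegral_indicator_const (measurableSet_plusFrom n),
    lintegral_indicator_const (measurableSet_plusFrom (n + 1))]

/-- The weight `2 ^ (N - n)` dominates the initial probabilities, and the one-step recursion
multiplies it by `β + (1 - β) / 2 = (1 + β) / 2`. -/
lemma IsPCA.iterate_plusFrom_le (hF : IsPCA α β F) (hβ0 : 0 ≤ β) (hβ1 : β ≤ 1)
    {x : Config} {N : ℤ} (hN : ∀ i, x i = true → i < N) (t : ℕ) (n : ℤ) :
    F^[t] (Measure.dirac x) (plusFrom n)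
      ≤ ENNReal.ofReal (((1 + β) / 2) ^ t * 2 ^ (N - n)) := by
  induction t generalizing n with
  | zero =>
    rw [Function.iterate_zero, id, Measure.dirac_apply' _ (measurableSet_plusFrom n)]
    by_cases hx : x ∈ plusFrom n
    · obtain ⟨i, hi, hxi⟩ := hx
      refine (Set.indicator_le_self' (fun _ _ => zero_le) x).trans ?_
      rw [Pi.one_apply, ENNReal.one_le_ofReal, pow_zero, one_mul]
      exact one_le_zpow₀ one_le_two (by have := hN i hxi; omega)
    · simp [hx]
  | succ t ih =>
    rw [Function.iterate_succ_apply']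
    refine (hF.apply_plusFrom_le hβ0 hβ1 _ n).trans ?_
    refine (add_le_add (mul_le_mul_right (ih n) _) (mul_le_mul_right (ih (n + 1)) _)).trans_eq ?_
    have hz : (2 : ℝ) ^ (N - n) = 2 ^ (N - (n + 1)) * 2 := by
      rw [← zpow_add_one₀ two_ne_zero]; congr 1; ring
    have hc : 0 ≤ 1 - β := by linarith
    rw [← ENNReal.ofReal_mul hβ0, ← ENNReal.ofReal_mul hc,
      ← ENNReal.ofReal_add (by positivity) (by positivity), hz]
    congr 1
    ring

lemma IsPCA.tendsto_plusFrom (hF : IsPCA α β F) (hβ0 : 0 ≤ β) (hβ1 : β < 1)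
    {x : Config} (hx : {i : ℤ | x i = true}.Finite) (n : ℤ) :
    Tendsto (fun t => F^[t] (Measure.dirac x) (plusFrom n)) atTop (nhds 0) := by
  obtain ⟨M, hM⟩ := hx.bddAbove
  have hN : ∀ i, x i = true → i < M + 1 := fun i hi => Int.lt_add_one_of_le (hM hi)
  refine tendsto_of_tendsto_of_tendsto_of_le_of_le tendsto_const_nhds ?_
    (fun _ => zero_le) (fun t => hF.iterate_plusFrom_le hβ0 hβ1.le hN t n)
  have h : Tendsto (fun t : ℕ => ((1 + β) / 2) ^ t * (2 : ℝ) ^ (M + 1 - n)) atTop (nhds 0) := by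
    simpa using (tendsto_pow_atTop_nhds_zero_of_lt_one (r := (1 + β) / 2)
      (by linarith) (by linarith)).mul_const ((2 : ℝ) ^ (M + 1 - n))
  simpa using ENNReal.tendsto_ofReal h

end Operator

end PCA

/-- if `β < 1` and `x` is an island of pluses, then `F^t δ_x`
converges on thin cylinders to `δ_allMinus`. -/
theorem pca_island_of_pluses_to_all_minus (α β : ℝ)
    (hα0 : 0 ≤ α) (hα1 : α ≤ 1) (hβ0 : 0 ≤ β) (hβ1 : β < 1)
    (F : Measure PCA.Config → Measure PCA.Config) (hF : PCA.IsPCA α β F)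
    (x : PCA.Config) (hx : {i : ℤ | x i = true}.Finite) :
    PCA.TendstoCyl (fun t => F^[t] (Measure.dirac x))
      (Measure.dirac PCA.allMinus) := by
  intro S a
  obtain ⟨n, hn⟩ := S.finite_toSet.bddBelow
  have hu := hF.tendsto_plusFrom hβ0 hβ1 hx n
  have hmeas := PCA.measurableSet_cyl S a
  rw [Measure.dirac_apply' _ hmeas]
  by_cases ha : PCA.allMinus ∈ PCA.cyl S a
  -- The complement of the cylinder forces a plus in `S`, hence at or beyond `n`.
  · have hsub : (PCA.cyl S a)ᶜ ⊆ PCA.plusFrom n := by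
      intro y hy
      by_contra h
      refine hy fun i hi => ?_
      rw [← ha i hi]
      by_contra h'
      exact h ⟨i, hn hi, by simpa [PCA.allMinus] using h'⟩
    rw [Set.indicator_of_mem ha, Pi.one_apply]
    have hsubone : Tendsto (fun t => 1 - F^[t] (Measure.dirac x) (PCA.plusFrom n)) atTop
        (nhds 1) := by
      simpa using ENNReal.Tendsto.sub tendsto_const_nhds hu (Or.inl ENNReal.one_ne_top)
    refine tendsto_of_tendsto_of_tendsto_of_le_of_le hsubone tendsto_const_nhds
      (fun t => ?_) (fun t => ?_)
    · have := hF.isProbabilityMeasure_iterate x t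
      have h1 := prob_compl_eq_one_sub (μ := F^[t] (Measure.dirac x)) hmeas.compl
      rw [compl_compl] at h1
      simp only [h1]
      exact tsub_le_tsub_left (measure_mono hsub) 1
    · have := hF.isProbabilityMeasure_iterate x t
      exact prob_le_one
  · have hsub : PCA.cyl S a ⊆ PCA.plusFrom n := by
      intro y hy
      by_contra h
      refine ha fun i hi => ?_
      rw [← hy i hi]
      by_contra h'
      exact h ⟨i, hn hi, by simpa [PCA.allMinus] using h'⟩
    rw [Set.indicator_of_notMem ha]
    exact tendsto_of_tendsto_of_tendsto_of_le_of_le tendsto_const_nhds hu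
      (fun _ => zero_le) (fun t => measure_mono hsub)
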